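/- Let R be a basic left Harada algebra with modules P_{ij} := rad^{j-1}(e_{i1}R) as below, and let f : P_{ij} → P_{il} be an injective homomorphism of right R-modules with j ≥ l. Then for every homomorphism g : P_{il'} → P_{il} with l' ≥ j, there exists a homomorphism h : P_{il'} → P_{ij} such that g = f ∘ h. -/

import Mathlib

/-!
Common setup.  `K` is an algebraically closed field and `R` a finite-dimensional associative
unital `K`-algebra.  Right `R`-modules are formalized as modules over the opposite ring `Rᵐᵒᵖ`
(so that `MulOpposite.op r • x = x * r`).
-/

open MulOpposite

/-- The right ideal `xR` of a ring `R`, as a submodule of `R` over `Rᵐᵒᵖ`. -/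
def rightIdeal (R : Type) [Ring R] (x : R) : Submodule Rᵐᵒᵖ R :=
  Submodule.span Rᵐᵒᵖ {x}

/-- The Jacobson radical of a submodule `N` (the intersection of the maximal submodules of the
module `N`), viewed as a submodule of the ambient module.  Iterating this operation gives the
iterated radicals `rad^k`. -/
def radSub {A M : Type} [Ring A] [AddCommGroup M] [Module A M] (N : Submodule A M) :
    Submodule A M :=
  Submodule.map N.subtype (sInf {P : Submodule A ↥N | IsCoatom P})

/-- A module is indecomposable if it is nonzero and admits no nontrivial direct sum
decomposition. -/
def IsIndecomposableMod (A M : Type) [Ring A] [AddCommGroup M] [Module A M] : Prop :=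
  Nontrivial M ∧ ∀ N N' : Submodule A M, IsCompl N N' → N = ⊥ ∨ N' = ⊥

/-- A module has projective dimension at most one iff it admits a surjection from a projective
module with projective kernel. -/
def PdLeOne (A : Type) [Ring A] (M : Type) [AddCommGroup M] [Module A M] : Prop :=
  ∃ (P : ModuleCat.{0} A) (f : ↥P →ₗ[A] M),
    Module.Projective A ↥P ∧ Function.Surjective f ∧
      Module.Projective A ↥(LinearMap.ker f)

/-- `Ext¹_A(M,N) = 0`, expressed by the splitting of every short exact sequence
`0 → N → E → M → 0`. -/
def Ext1Zero (A : Type) [Ring A] (M N : Type) [AddCommGroup M] [Module A M]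
    [AddCommGroup N] [Module A N] : Prop :=
  ∀ (E : ModuleCat.{0} A) (i : N →ₗ[A] ↥E) (p : ↥E →ₗ[A] M),
    Function.Injective i → Function.Surjective p → LinearMap.range i = LinearMap.ker p →
    ∃ s : M →ₗ[A] ↥E, p.comp s = LinearMap.id

/-- `X ∈ add T` : `X` is a direct summand of a finite direct sum of copies of `T`. -/
def InAdd (A : Type) [Ring A] (T X : Type) [AddCommGroup T] [Module A T]
    [AddCommGroup X] [Module A X] : Prop :=
  ∃ (k : ℕ) (f : X →ₗ[A] (Fin k → T)) (g : (Fin k → T) →ₗ[A] X),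
    g.comp f = LinearMap.id

/-- `T` is a (finitely generated) tilting right `R`-module: projective dimension at most one,
no self-extensions, and there is a short exact sequence `0 → R → T₀ → T₁ → 0` with
`T₀, T₁ ∈ add T`. -/
def IsTiltingRight (R : Type) [Ring R] (T : Type) [AddCommGroup T] [Module Rᵐᵒᵖ T] : Prop :=
  Module.Finite Rᵐᵒᵖ T ∧ PdLeOne Rᵐᵒᵖ T ∧ Ext1Zero Rᵐᵒᵖ T T ∧
    ∃ (T₀ T₁ : ModuleCat.{0} Rᵐᵒᵖ) (f : R →ₗ[Rᵐᵒᵖ] ↥T₀) (g : ↥T₀ →ₗ[Rᵐᵒᵖ] ↥T₁),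
      InAdd Rᵐᵒᵖ T ↥T₀ ∧ InAdd Rᵐᵒᵖ T ↥T₁ ∧
        Function.Injective f ∧ Function.Surjective g ∧ LinearMap.range f = LinearMap.ker g

/-- `T` is basic: it is an (internal) direct sum of pairwise non-isomorphic indecomposable
submodules. -/
def IsBasicMod (A : Type) [Ring A] (T : Type) [AddCommGroup T] [Module A T] : Prop :=
  ∃ (k : ℕ) (N : Fin k → Submodule A T),
    DirectSum.IsInternal N ∧ (∀ a, IsIndecomposableMod A ↥(N a)) ∧
      ∀ a b, a ≠ b → IsEmpty (↥(N a) ≃ₗ[A] ↥(N b))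

/-- The setoid identifying isomorphic modules (among those with property `P`). -/
def isoSetoid (A : Type) [Ring A] (P : ModuleCat.{0} A → Prop) :
    Setoid {M : ModuleCat.{0} A // P M} where
  r M N := Nonempty (↥M.1 ≃ₗ[A] ↥N.1)
  iseqv := ⟨fun M => ⟨LinearEquiv.refl A ↥M.1⟩, fun ⟨e⟩ => ⟨e.symm⟩,
    fun ⟨e⟩ ⟨f⟩ => ⟨e.trans f⟩⟩

/-- The data exhibiting a ring `R` as a basic left Harada algebra:
a complete set `{e i j}` of orthogonal primitive idempotents with pairwise non-isomorphic
right ideals `(e i j)R` (`R` is basic), such that each `(e i 0)R` is an injective right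
module, and `(e i j)R ≅ rad ((e i (j-1))R)` for `j ≥ 1`.  (Indices are shifted by one from
the paper: the paper's `e_{ij}` is `e i (j-1)` here.) -/
structure HaradaData (R : Type) [Ring R] : Type where
  m : ℕ
  hm : 0 < m
  n : Fin m → ℕ
  hn : ∀ i, 0 < n i
  e : (i : Fin m) → Fin (n i) → R
  idem : ∀ i j, IsIdempotentElem (e i j)
  orth : ∀ p q : Σ i : Fin m, Fin (n i), p ≠ q → e p.1 p.2 * e q.1 q.2 = 0
  sum_eq_one : ∑ p : Σ i : Fin m, Fin (n i), e p.1 p.2 = 1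
  indec : ∀ i j, IsIndecomposableMod Rᵐᵒᵖ ↥(rightIdeal R (e i j))
  basic : ∀ p q : Σ i : Fin m, Fin (n i), p ≠ q →
    IsEmpty (↥(rightIdeal R (e p.1 p.2)) ≃ₗ[Rᵐᵒᵖ] ↥(rightIdeal R (e q.1 q.2)))
  inj : ∀ i, Module.Injective Rᵐᵒᵖ ↥(rightIdeal R (e i ⟨0, hn i⟩))
  rad_iso : ∀ (i : Fin m) (j : Fin (n i)), 0 < j.val →
    Nonempty (↥(rightIdeal R (e i j)) ≃ₗ[Rᵐᵒᵖ]
      ↥(radSub (rightIdeal R (e i ⟨j.val - 1, Nat.lt_of_le_of_lt (Nat.sub_le j.val 1) j.isLt⟩))))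

variable {R : Type} [Ring R]

/-- `H.P i j = rad^j ((e i 0)R)`; this is the paper's `P_{i,j+1} = rad^j (e_{i1}R)`,
a submodule of `R`. -/
def HaradaData.P (H : HaradaData R) (i : Fin H.m) (j : Fin (H.n i)) : Submodule Rᵐᵒᵖ R :=
  radSub^[j.val] (rightIdeal R (H.e i ⟨0, H.hn i⟩))

/-- The quotient module `P_{ik}/P_{il}` (for `l ≥ k` we have `H.P i l ≤ H.P i k`). -/
abbrev HaradaData.Quot (H : HaradaData R) (i : Fin H.m) (k l : Fin (H.n i)) : Type :=
  ↥(H.P i k) ⧸ Submodule.comap (H.P i k).subtype (H.P i l)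

/-- The last index (the paper's `n_i`) in `Fin (H.n i)`. -/
def HaradaData.last (H : HaradaData R) (i : Fin H.m) : Fin (H.n i) :=
  ⟨H.n i - 1, Nat.sub_lt (H.hn i) one_pos⟩

/-- The right ideal `I = ⊕_{i,j} rad^{n_i - j + 1}(e_{ij}R)` of the paper. -/
def HaradaData.I (H : HaradaData R) : Submodule Rᵐᵒᵖ R :=
  ⨆ p : Σ i : Fin H.m, Fin (H.n i),
    radSub^[H.n p.1 - p.2.val] (rightIdeal R (H.e p.1 p.2))

/-- The submodule `T·I` of a right module `T`, for `I` a right ideal of `R`. -/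
def smulSub (I : Submodule Rᵐᵒᵖ R) (T : Type) [AddCommGroup T] [Module Rᵐᵒᵖ T] :
    Submodule Rᵐᵒᵖ T :=
  Submodule.span Rᵐᵒᵖ {x : T | ∃ (t : T) (r : R), r ∈ I ∧ x = op r • t}


theorem radSub_le_self {A M : Type} [Ring A] [AddCommGroup M] [Module A M]
    (N : Submodule A M) : radSub N ≤ N := by
  unfold radSub
  exact Submodule.map_subtype_le _ _

theorem map_mem_radSub {A M : Type} [Ring A] [AddCommGroup M] [Module A M]
    (N : Submodule A M) (φ : ↥N →ₗ[A] ↥N) (x : ↥N) (hx : (x : M) ∈ radSub N) :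
    (φ x : M) ∈ radSub N := by
  unfold radSub at hx ⊢
  obtain ⟨y, hy, hyx⟩ := hx
  have hxy : y = x := Subtype.ext hyx
  subst hxy
  exact ⟨φ y, Module.le_comap_jacobson φ hy, rfl⟩

theorem radSub_iter_antitone {A M : Type} [Ring A] [AddCommGroup M] [Module A M]
    (N : Submodule A M) : Antitone (fun k : ℕ => radSub^[k] N) := by
  refine antitone_nat_of_succ_le fun k => ?_
  simp only [Function.iterate_succ_apply']
  exact radSub_le_self _

theorem map_mem_radSub_iter {A M : Type} [Ring A] [AddCommGroup M] [Module A M]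
    (N : Submodule A M) (φ : ↥N →ₗ[A] ↥N) (k : ℕ) :
    ∀ x : ↥N, (x : M) ∈ radSub^[k] N → (φ x : M) ∈ radSub^[k] N := by
  induction k with
  | zero => intro x _; exact (φ x).2
  | succ k ih =>
    intro x hx
    rw [Function.iterate_succ_apply'] at hx ⊢
    have hle : radSub^[k] N ≤ N := radSub_iter_antitone N (Nat.zero_le k)
    let ψ : ↥(radSub^[k] N) →ₗ[A] ↥(radSub^[k] N) :=
      LinearMap.codRestrict _ (N.subtype ∘ₗ φ ∘ₗ Submodule.inclusion hle)
        (fun y => ih _ y.2)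
    exact map_mem_radSub _ ψ ⟨x, radSub_le_self _ hx⟩ hx

/-- Lemma 2.3(3).  Let `f : P_{ij} → P_{il}` be injective, `j ≥ l`.  Every
`g : P_{il'} → P_{il}` with `l' ≥ j` factors as `g = f ∘ h`. -/
theorem statement7 (K R : Type) [Field K] [IsAlgClosed K] [Ring R] [Algebra K R]
    [FiniteDimensional K R] (H : HaradaData R) (i : Fin H.m) (j l l' : Fin (H.n i))
    (f : ↥(H.P i j) →ₗ[Rᵐᵒᵖ] ↥(H.P i l)) (hf : Function.Injective f) (hjl : l ≤ j)
    (g : ↥(H.P i l') →ₗ[Rᵐᵒᵖ] ↥(H.P i l)) (hl' : j ≤ l') :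
    ∃ h : ↥(H.P i l') →ₗ[Rᵐᵒᵖ] ↥(H.P i j), g = f.comp h := by
  haveI : IsScalarTower K Rᵐᵒᵖ R := ⟨fun k r x => by
    simp [MulOpposite.smul_eq_mul_unop]⟩
  haveI : IsArtinian Rᵐᵒᵖ R := isArtinian_of_tower K inferInstance
  have hanti := radSub_iter_antitone (rightIdeal R (H.e i ⟨0, H.hn i⟩))
  have hle : ∀ k, H.P i k ≤ rightIdeal R (H.e i ⟨0, H.hn i⟩) :=
    fun k => hanti (Nat.zero_le k.val)
  -- every map `P_{ik} → P_{il}` has image in `P_{ik}`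
  have key : ∀ (k : Fin (H.n i)) (u : ↥(H.P i k) →ₗ[Rᵐᵒᵖ] ↥(H.P i l)) (x : ↥(H.P i k)),
      (u x : R) ∈ H.P i k := by
    intro k u x
    obtain ⟨φ, hφ⟩ := (H.inj i).out (Submodule.inclusion (hle k))
      (Submodule.inclusion_injective _) (Submodule.inclusion (hle l) ∘ₗ u)
    have h1 := map_mem_radSub_iter _ φ k.val (Submodule.inclusion (hle k) x) x.2
    rw [hφ x] at h1
    exact h1
  let F : ↥(H.P i j) →ₗ[Rᵐᵒᵖ] ↥(H.P i j) :=
    LinearMap.codRestrict _ ((H.P i l).subtype ∘ₗ f) (key j f)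
  have hF : Function.Injective F := by
    intro x y hxy
    exact hf (Subtype.ext (congrArg (fun z : ↥(H.P i j) => (z : R)) hxy))
  have hFs : Function.Surjective F :=
    IsArtinian.surjective_of_injective_endomorphism F hF
  let E := LinearEquiv.ofBijective F ⟨hF, hFs⟩
  let G : ↥(H.P i l') →ₗ[Rᵐᵒᵖ] ↥(H.P i j) :=
    LinearMap.codRestrict _ ((H.P i l).subtype ∘ₗ g) (fun x => hanti hl' (key l' g x))
  refine ⟨E.symm.toLinearMap ∘ₗ G, ?_⟩
  ext x
  have h2 : F (E.symm (G x)) = G x := E.apply_symm_apply (G x)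
  exact (congrArg (fun z : ↥(H.P i j) => (z : R)) h2).symm
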